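/- arXiv:0807.2191 — 2 statements merged into one kernel-verified Lean document; each statement's English description precedes it below -/
import Mathlib

section
/- Let k be an algebraically closed field of characteristic zero, let n ≥ 1, and let G be a finite subgroup of GL(n,k), acting on the polynomial ring R = k[x₁,…,xₙ] by the dual action (g·f)(p) = f(g⁻¹·p) (k-algebra automorphisms given by linear substitution of the variables). Then the invariant subalgebra R^G = { f ∈ R : g·f = f for all g ∈ G } is an integral domain and a finitely generated k-algebra. -/
/-- The dual action of `g ∈ GL(n,k)` on polynomials: `(g · f)(p) = f(g⁻¹ · p)`, i.e. the
`k`-algebra endomorphism substituting `xᵢ ↦ Σⱼ (g⁻¹)ᵢⱼ xⱼ`. -/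
noncomputable def glSubst {k : Type*} [Field k] {n : ℕ}
    (g : Matrix.GeneralLinearGroup (Fin n) k) :
    MvPolynomial (Fin n) k →ₐ[k] MvPolynomial (Fin n) k :=
  MvPolynomial.aeval fun i =>
    ∑ j, MvPolynomial.C ((↑(g⁻¹) : Matrix (Fin n) (Fin n) k) i j) * MvPolynomial.X j

/-- The invariant subalgebra `k[x₁,…,xₙ]^G` of a subgroup `G ⊆ GL(n,k)` acting dually on
polynomials. -/
noncomputable def glInvariants {k : Type*} [Field k] {n : ℕ}
    (G : Subgroup (Matrix.GeneralLinearGroup (Fin n) k)) :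
    Subalgebra k (MvPolynomial (Fin n) k) where
  carrier := {f | ∀ g ∈ G, glSubst g f = f}
  mul_mem' := by
    intro a b ha hb g hg
    rw [map_mul, ha g hg, hb g hg]
  add_mem' := by
    intro a b ha hb g hg
    rw [map_add, ha g hg, hb g hg]
  algebraMap_mem' := by
    intro r g hg
    exact (glSubst g).commutes r

/-!
An element `c` of a ring acted on by a finite group is a root of the monic polynomial
`∏ g, (T - g • c)`, whose coefficients are invariant, so the ring is integral over its invariants.
If it is finitely generated as an algebra over a Noetherian base, it is therefore a finite module
over the invariants, and the Artin–Tate lemma transfers finite generation to the invariants.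
-/

section Invariants

variable (A B C G : Type*) [CommRing A] [CommRing B] [CommRing C] [Algebra B C]
  [Group G] [Finite G] [MulSemiringAction G C]

theorem moduleFinite_of_isInvariant [Algebra.IsInvariant B C G] [Algebra.FiniteType B C] :
    Module.Finite B C :=
  have : Algebra.IsIntegral B C := Algebra.IsInvariant.isIntegral B C G
  Algebra.IsIntegral.finite

theorem finiteType_of_isInvariant [Algebra A B] [Algebra A C] [IsScalarTower A B C]
    [IsNoetherianRing A] [FaithfulSMul B C] [Algebra.IsInvariant B C G] [Algebra.FiniteType A C] :
    Algebra.FiniteType A B := by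
  have : Algebra.FiniteType B C := .of_restrictScalars_finiteType A B C
  have : Module.Finite B C := moduleFinite_of_isInvariant B C G
  exact ⟨fg_of_fg_of_fg A B C Algebra.FiniteType.out Module.Finite.fg_top
    (FaithfulSMul.algebraMap_injective B C)⟩

theorem finiteType_fixedPoints [Algebra A C] [SMulCommClass G A C] [IsNoetherianRing A]
    [Algebra.FiniteType A C] : Algebra.FiniteType A (FixedPoints.subalgebra A C G) :=
  have : Algebra.IsInvariant (FixedPoints.subalgebra A C G) C G := ⟨fun c hc ↦ ⟨⟨c, hc⟩, rfl⟩⟩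
  finiteType_of_isInvariant A (FixedPoints.subalgebra A C G) C G

end Invariants

section LinearSubstitution

variable {k : Type*} [Field k] {n : ℕ}

theorem glSubst_one : glSubst (1 : Matrix.GeneralLinearGroup (Fin n) k) = AlgHom.id k _ := by
  ext1 i
  simp [glSubst, Matrix.one_apply]

theorem glSubst_mul (g h : Matrix.GeneralLinearGroup (Fin n) k) :
    glSubst (g * h) = (glSubst g).comp (glSubst h) := by
  ext1 i
  simp only [glSubst, AlgHom.comp_apply, MvPolynomial.aeval_X, map_sum, map_mul,
    MvPolynomial.algHom_C, MvPolynomial.algebraMap_eq, mul_inv_rev, Units.val_mul,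
    Matrix.mul_apply, Finset.sum_mul, Finset.mul_sum, mul_assoc]
  exact Finset.sum_comm

/-- The dual action of `GL(n,k)` on polynomials, by `glSubst`. It is made an instance only locally,
since `MvPolynomial` already carries the coefficientwise action of whatever acts on `k`. -/
@[reducible]
noncomputable def glMulSemiringAction :
    MulSemiringAction (Matrix.GeneralLinearGroup (Fin n) k) (MvPolynomial (Fin n) k) where
  smul g := glSubst g
  one_smul := DFunLike.congr_fun glSubst_one
  mul_smul g h := DFunLike.congr_fun (glSubst_mul g h)
  smul_zero g := map_zero (glSubst g)
  smul_add g := map_add (glSubst g)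
  smul_one g := map_one (glSubst g)
  smul_mul g := map_mul (glSubst g)

attribute [local instance] glMulSemiringAction

theorem glMulSemiringAction_smulCommClass :
    SMulCommClass (Matrix.GeneralLinearGroup (Fin n) k) k (MvPolynomial (Fin n) k) :=
  ⟨fun g ↦ map_smul (glSubst g)⟩

attribute [local instance] glMulSemiringAction_smulCommClass

theorem glInvariants_eq_fixedPoints (G : Subgroup (Matrix.GeneralLinearGroup (Fin n) k)) :
    glInvariants G = FixedPoints.subalgebra k (MvPolynomial (Fin n) k) G :=
  Subalgebra.ext fun _ ↦ ⟨fun hf g ↦ hf g g.2, fun hf g hg ↦ hf ⟨g, hg⟩⟩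

theorem statement0_general (G : Subgroup (Matrix.GeneralLinearGroup (Fin n) k)) [Finite G] :
    IsDomain (glInvariants G) ∧ Algebra.FiniteType k (glInvariants G) := by
  refine ⟨inferInstance, ?_⟩
  rw [glInvariants_eq_fixedPoints]
  exact finiteType_fixedPoints k (MvPolynomial (Fin n) k) G

end LinearSubstitution

/-- Let `k` be an algebraically closed field of characteristic zero, `n ≥ 1` and `G` a finite
subgroup of `GL(n,k)` acting dually on `R = k[x₁,…,xₙ]`.  Then the invariant subalgebra `R^G`
is an integral domain and a finitely generated `k`-algebra. -/
theorem statement0 (k : Type*) [Field k] [IsAlgClosed k] [CharZero k] (n : ℕ) (hn : 1 ≤ n)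
    (G : Subgroup (Matrix.GeneralLinearGroup (Fin n) k)) [Finite G] :
    IsDomain (glInvariants G) ∧ Algebra.FiniteType k (glInvariants G) :=
  statement0_general G
end

section
/- Let k be a field and S a finitely generated submonoid of ℤ^d that generates ℤ^d as a group. Then the monoid algebra k[S] is an integrally closed domain (normal) if and only if S is saturated, i.e. for every u ∈ ℤ^d, if m·u ∈ S for some integer m ≥ 1 then u ∈ S. Equivalently, k[S] is normal if and only if S equals the set Cone(S) ∩ ℤ^d of lattice points of the rational polyhedral cone generated by S in ℚ^d. -/
/-!
Every exponent of an element `f` of `R[G]` that is integral over `R[S]` has a positive multiple in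
`S`. Indeed the integral equation lives over `R[T]` for some finitely generated `T ≤ S`, where `f`
is almost integral: all `r * f ^ n` lie in `R[T]` for one fixed `r ≠ 0`. For a linear group order on
`G`, comparing greatest exponents yields `c + n • u ∈ T` for all `n`, where `u` is the greatest
exponent of `f`; by Dickson's lemma two of these elements differ by an element of `T`, which is a
positive multiple of `u`. The remaining exponents follow because monomials whose exponent has a
positive multiple in `S` are themselves integral and may be subtracted from `f`.

So `R[S]` is integrally closed in `R[G]` when `S` is saturated, and `R[G]` is integrally closed as a
localization of a polynomial ring. Conversely, if `u = a - c` with `a, c ∈ S` and `m • u ∈ S`, then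
`(t ^ c) ^ m` divides `(t ^ a) ^ m`, hence `t ^ c` divides `t ^ a` in an integrally closed `R[S]`.
-/

open AddMonoidAlgebra

section MvPolynomial

attribute [local instance] MvPolynomial.algebraMvPolynomial

theorem isIntegrallyClosed_mvPolynomial (σ R : Type*) [CommRing R] [IsDomain R]
    [IsIntegrallyClosed R] : IsIntegrallyClosed (MvPolynomial σ R) := by
  let K := FractionRing R
  have : IsIntegrallyClosed (MvPolynomial σ K) := UniqueFactorizationMonoid.instIsIntegrallyClosed
  have hinj : Function.Injective (MvPolynomial.map (σ := σ) (algebraMap R K)) :=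
    MvPolynomial.map_injective _ (IsFractionRing.injective R K)
  have : FaithfulSMul (MvPolynomial σ R) (MvPolynomial σ K) :=
    (faithfulSMul_iff_algebraMap_injective _ _).2 hinj
  suffices IsIntegrallyClosedIn (MvPolynomial σ R) (MvPolynomial σ K) from
    .of_isIntegrallyClosed_of_isIntegrallyClosedIn _ (MvPolynomial σ K)
  refine isIntegrallyClosedIn_iff.mpr ⟨hinj, fun {p} hp ↦ ?_⟩
  refine MvPolynomial.mem_range_map_iff_coeffs_subset.2 fun a ha ↦ ?_
  obtain ⟨n, -, rfl⟩ := MvPolynomial.mem_coeffs_iff.1 ha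
  exact IsIntegrallyClosed.isIntegral_iff.mp (MvPolynomial.isIntegral_iff_isIntegral_coeff.1 hp n)

end MvPolynomial

theorem exists_linearOrder_isOrderedAddMonoid (G : Type*) [AddCommGroup G] [Module.Free ℤ G] :
    ∃ _ : LinearOrder G, IsOrderedAddMonoid G := by
  classical
  let b := Module.Free.chooseBasis ℤ G
  let _ : LinearOrder (Module.Free.ChooseBasisIndex ℤ G) := linearOrderOfSTO WellOrderingRel
  let f : G → Lex (Module.Free.ChooseBasisIndex ℤ G →₀ ℤ) := fun g ↦ toLex (b.repr g)
  have hf : f.Injective := toLex.injective.comp b.repr.injective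
  let _ : LinearOrder G := LinearOrder.lift' f hf
  exact ⟨_, Function.Injective.isOrderedAddMonoid f (fun x y ↦ by simp [f]) .rfl⟩

section GreatestExponent

variable {R A : Type*} [Semiring R] [NoZeroDivisors R] [AddCommMonoid A] [LinearOrder A]
  [IsOrderedCancelAddMonoid A] {f g : R[A]} {u v : A}

theorem isGreatest_support_mul (hf : IsGreatest (f.coeff.support : Set A) u)
    (hg : IsGreatest (g.coeff.support : Set A) v) :
    IsGreatest ((f * g).coeff.support : Set A) (u + v) := by
  classical
  have hunique : UniqueAdd f.coeff.support g.coeff.support u v := fun x y hx hy hxy ↦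
    (add_eq_add_iff_eq_and_eq (hf.2 hx) (hg.2 hy)).1 hxy
  constructor
  · have hu := Finsupp.mem_support_iff.1 hf.1
    have hv := Finsupp.mem_support_iff.1 hg.1
    exact Finsupp.mem_support_iff.2 (coeff_mul_add_of_uniqueAdd hunique ▸ mul_ne_zero hu hv)
  · intro x hx
    obtain ⟨y, hy, z, hz, rfl⟩ := Finset.mem_add.1 (support_coeff_mul_subset f g hx)
    exact add_le_add (hf.2 hy) (hg.2 hz)

theorem isGreatest_support_pow [Nontrivial R] (hf : IsGreatest (f.coeff.support : Set A) u)
    (n : ℕ) : IsGreatest ((f ^ n).coeff.support : Set A) (n • u) := by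
  induction n with
  | zero => simp [one_def, IsGreatest, upperBounds]
  | succ n ih => simpa only [pow_succ, succ_nsmul] using isGreatest_support_mul ih hf

end GreatestExponent

theorem exists_isGreatest_support {R A : Type*} [Semiring R] [LinearOrder A] {f : R[A]}
    (hf : f ≠ 0) : ∃ u, IsGreatest (f.coeff.support : Set A) u :=
  ⟨_, Finset.isGreatest_max' _ (by simpa [Finset.nonempty_iff_ne_empty] using hf)⟩

section Group

variable {G : Type*} [AddCommGroup G]

/-- The root closure of a submonoid `S`: the elements having a positive multiple in `S`. Thus `S` is
saturated if and only if `rootClosure S ⊆ S`. -/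
def rootClosure (S : AddSubmonoid G) : Set G :=
  {u | ∃ m : ℕ, 1 ≤ m ∧ m • u ∈ S}

theorem rootClosure_mono {S T : AddSubmonoid G} (h : S ≤ T) : rootClosure S ⊆ rootClosure T :=
  fun _ ⟨m, hm, hu⟩ ↦ ⟨m, hm, h hu⟩

theorem mem_rootClosure_of_forall_add_nsmul_mem {S : AddSubmonoid G} (hS : S.FG) {c u : G}
    (h : ∀ n : ℕ, c + n • u ∈ S) : u ∈ rootClosure S := by
  obtain ⟨k, π, rfl⟩ := AddSubmonoid.fg_iff_exists_fin_addMonoidHom.1 hS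
  choose x hx using h
  obtain ⟨i, j, hij, hle⟩ := wellQuasiOrdered_le x
  refine ⟨j - i, by omega, x j - x i, add_right_cancel (b := π (x i)) ?_⟩
  rw [← map_add, tsub_add_cancel_of_le hle, hx, hx, add_left_comm, ← add_nsmul,
    Nat.sub_add_cancel hij.le]

theorem exists_add_mem_of_closure_eq_top {S : AddSubmonoid G}
    (hS : AddSubgroup.closure (S : Set G) = ⊤) (u : G) : ∃ c ∈ S, c + u ∈ S := by
  have hu : u ∈ AddSubgroup.closure (S : Set G) := hS ▸ AddSubgroup.mem_top u
  induction hu using AddSubgroup.closure_induction with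
  | mem x hx => exact ⟨0, S.zero_mem, by simpa using hx⟩
  | zero => exact ⟨0, S.zero_mem, by simp⟩
  | add x y _ _ hx hy =>
    obtain ⟨a, ha, hax⟩ := hx
    obtain ⟨b, hb, hby⟩ := hy
    exact ⟨a + b, add_mem ha hb, add_add_add_comm a b x y ▸ add_mem hax hby⟩
  | neg x _ hx =>
    obtain ⟨a, ha, hax⟩ := hx
    exact ⟨a + x, hax, by simpa using ha⟩

theorem exists_forall_add_mem_of_closure_eq_top {S : AddSubmonoid G}
    (hS : AddSubgroup.closure (S : Set G) = ⊤) (s : Finset G) : ∃ c ∈ S, ∀ u ∈ s, c + u ∈ S := by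
  classical
  induction s using Finset.induction_on with
  | empty => exact ⟨0, S.zero_mem, by simp⟩
  | insert v s _ ih =>
    obtain ⟨c, hc, hcs⟩ := ih
    obtain ⟨b, hb, hbv⟩ := exists_add_mem_of_closure_eq_top hS v
    refine ⟨b + c, add_mem hb hc, Finset.forall_mem_insert _ _ _ |>.2 ⟨?_, fun u hu ↦ ?_⟩⟩
    · exact add_right_comm b c v ▸ add_mem hbv hc
    · exact add_assoc b c u ▸ add_mem hb (hcs u hu)

theorem exists_injective_closure_mrange_eq_top {σ : Type*} (b : Module.Basis σ ℤ G) :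
    ∃ ι : (σ →₀ ℕ) →+ G, Function.Injective ι ∧
      AddSubgroup.closure (AddMonoidHom.mrange ι : Set G) = ⊤ := by
  let ι : (σ →₀ ℕ) →+ G :=
    b.repr.symm.toAddMonoidHom.comp (Finsupp.mapRange.addMonoidHom (Nat.castAddMonoidHom ℤ))
  have hι : Function.Injective ι :=
    b.repr.symm.injective.comp (Finsupp.mapRange_injective _ rfl Nat.cast_injective)
  refine ⟨ι, hι, (AddSubgroup.eq_top_iff' _).2 fun g ↦ ?_⟩
  let pos := (b.repr g).mapRange Int.toNat rfl
  let neg := (-b.repr g).mapRange Int.toNat rfl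
  have hg : ι pos - ι neg = g := by
    apply b.repr.injective
    ext i
    simp [ι, pos, neg]
  exact hg ▸ sub_mem (AddSubgroup.subset_closure ⟨pos, rfl⟩) (AddSubgroup.subset_closure ⟨neg, rfl⟩)

end Group

section Embedding

variable {R : Type*} [CommRing R] {G : Type*} [AddCommGroup G]

variable (R) in
/-- The group algebra `R[G]` as an algebra over the monoid algebra `R[S]` of a submonoid `S` of `G`,
the structure map being the extension of the inclusion. It is only ever a local instance. -/
noncomputable abbrev algebraOfAddSubmonoid (S : AddSubmonoid G) : Algebra R[S] R[G] :=
  (mapDomainRingHom R S.subtype).toAlgebra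

attribute [local instance] algebraOfAddSubmonoid

theorem algebraMap_addSubmonoid_single (S : AddSubmonoid G) (s : S) (r : R) :
    algebraMap R[S] R[G] (single s r) = single (s : G) r :=
  mapDomain_single

theorem algebraMap_addSubmonoid_injective (S : AddSubmonoid G) :
    Function.Injective (algebraMap R[S] R[G]) :=
  mapDomain_injective Subtype.val_injective

theorem mem_range_algebraMap_iff_support_subset {S : AddSubmonoid G} {f : R[G]} :
    f ∈ (algebraMap R[S] R[G]).range ↔ (f.coeff.support : Set G) ⊆ S := by
  classical
  constructor
  · rintro ⟨x, rfl⟩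
    refine (Finset.coe_subset.2 (Finsupp.mapDomain_support (f := S.subtype))).trans ?_
    simpa [Set.subset_def] using fun u hu _ ↦ hu
  · intro hf
    exact ⟨f.comapDomain S.subtype Subtype.val_injective, mapDomain_comapDomain (by simpa) _⟩

theorem single_mul_mem_range_algebraMap {S : AddSubmonoid G} {f : R[G]} {c : G}
    (h : ∀ u ∈ f.coeff.support, c + u ∈ S) :
    single c 1 * f ∈ (algebraMap R[S] R[G]).range := by
  classical
  refine mem_range_algebraMap_iff_support_subset.2 fun x hx ↦ ?_
  obtain ⟨y, hy, u, hu, rfl⟩ := Finset.mem_add.1 (support_coeff_mul_subset _ _ hx)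
  obtain rfl := Finset.mem_singleton.1 (Finsupp.support_single_subset hy)
  exact h u hu

variable (R) in
theorem isLocalization_mrange_of {S : AddSubmonoid G}
    (hS : AddSubgroup.closure (S : Set G) = ⊤) :
    IsLocalization (MonoidHom.mrange (of R S)) R[G] where
  map_units := by
    rintro ⟨_, s, rfl⟩
    refine .of_mul_eq_one (single (-(s.toAdd : G)) 1) ?_
    simp [algebraMap_addSubmonoid_single, single_mul_single, one_def]
  surj f := by
    obtain ⟨c, hc, hcf⟩ := exists_forall_add_mem_of_closure_eq_top hS f.coeff.support
    obtain ⟨x, hx⟩ := single_mul_mem_range_algebraMap hcf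
    refine ⟨⟨x, ⟨_, Multiplicative.ofAdd ⟨c, hc⟩, rfl⟩⟩, ?_⟩
    simp [hx, algebraMap_addSubmonoid_single, mul_comm]
  exists_of_eq h := ⟨1, by rw [algebraMap_addSubmonoid_injective S h]⟩

theorem exists_fg_le_isIntegral {S : AddSubmonoid G} {f : R[G]} (hf : IsIntegral R[S] f)
    {s : Finset G} (hs : (s : Set G) ⊆ S) :
    ∃ T ≤ S, T.FG ∧ (s : Set G) ⊆ T ∧ IsIntegral R[T] f := by
  classical
  obtain ⟨p, hp, hpf⟩ := hf
  let q := p.map (algebraMap R[S] R[G])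
  let t := s ∪ q.support.biUnion fun i ↦ (q.coeff i).coeff.support
  have htS : (t : Set G) ⊆ S := by
    have hq (i : ℕ) : ((q.coeff i).coeff.support : Set G) ⊆ S :=
      mem_range_algebraMap_iff_support_subset.1 ⟨p.coeff i, (Polynomial.coeff_map _ i).symm⟩
    simpa only [t, Finset.coe_union, Finset.coe_biUnion, Set.union_subset_iff,
      Set.iUnion_subset_iff] using ⟨hs, fun i _ ↦ hq i⟩
  have hlift : q ∈ Polynomial.lifts (algebraMap R[AddSubmonoid.closure (t : Set G)] R[G]) := by
    refine (Polynomial.lifts_iff_coeff_lifts q).2 fun i ↦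
      mem_range_algebraMap_iff_support_subset.2 (Set.Subset.trans ?_ AddSubmonoid.subset_closure)
    by_cases hi : i ∈ q.support
    · exact Finset.coe_subset.2
        ((Finset.subset_biUnion_of_mem (fun i ↦ (q.coeff i).coeff.support) hi).trans
          Finset.subset_union_right)
    · simp [Polynomial.notMem_support_iff.1 hi]
  obtain ⟨p', hp'q, -, hp'⟩ := Polynomial.lifts_and_natDegree_eq_and_monic hlift (hp.map _)
  refine ⟨.closure t, AddSubmonoid.closure_le.2 htS, ⟨t, rfl⟩,
    (Finset.coe_subset.2 Finset.subset_union_left).trans AddSubmonoid.subset_closure, p', hp', ?_⟩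
  rw [Polynomial.eval₂_eq_eval_map, hp'q, ← Polynomial.eval₂_eq_eval_map, hpf]

theorem mem_rootClosure_of_isGreatest_support [IsDomain R] [LinearOrder G] [IsOrderedAddMonoid G]
    {S : AddSubmonoid G} (hS : AddSubgroup.closure (S : Set G) = ⊤) {f : R[G]} {u : G}
    (hf : IsIntegral R[S] f) (hu : IsGreatest (f.coeff.support : Set G) u) :
    u ∈ rootClosure S := by
  classical
  obtain ⟨c, hc, hcf⟩ := exists_forall_add_mem_of_closure_eq_top hS f.coeff.support
  obtain ⟨T, hTS, hT, hcT, hfT⟩ :=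
    exists_fg_le_isIntegral hf (s := insert c (f.coeff.support.image (c + ·)))
      (by simpa only [Finset.coe_insert, Finset.coe_image, Set.insert_subset_iff,
        Set.image_subset_iff] using ⟨hc, hcf⟩)
  have hc : c ∈ T := hcT (by simp)
  have hcf : ∀ u ∈ f.coeff.support, c + u ∈ T := fun u hu ↦
    hcT (Finset.mem_insert_of_mem (Finset.mem_image_of_mem _ hu))
  have : IsDomain R[T] := (algebraMap_addSubmonoid_injective T).isDomain _
  obtain ⟨r, hr, hrf⟩ : IsAlmostIntegral R[T] f := by
    refine hfT.isAlmostIntegral_of_exists_smul_mem_range ⟨single ⟨c, hc⟩ 1, ?_, ?_⟩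
    · simp
    · rw [Algebra.smul_def, algebraMap_addSubmonoid_single]
      exact single_mul_mem_range_algebraMap hcf
  have hr : algebraMap R[T] R[G] r ≠ 0 :=
    (map_ne_zero_iff _ (algebraMap_addSubmonoid_injective T)).2 (nonZeroDivisors.ne_zero hr)
  obtain ⟨v, hv⟩ := exists_isGreatest_support hr
  refine rootClosure_mono hTS (mem_rootClosure_of_forall_add_nsmul_mem hT (c := v) fun n ↦ ?_)
  refine mem_range_algebraMap_iff_support_subset.1 (hrf n) ?_
  rw [Algebra.smul_def]
  exact (isGreatest_support_mul hv (isGreatest_support_pow hu n)).1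

theorem isIntegral_of_support_subset_rootClosure {S : AddSubmonoid G} {f : R[G]}
    (hf : (f.coeff.support : Set G) ⊆ rootClosure S) : IsIntegral R[S] f := by
  rw [← f.sum_coeff_single]
  refine IsIntegral.sum _ fun u hu ↦ ?_
  obtain ⟨m, hm, hmu⟩ := hf hu
  refine IsIntegral.of_pow hm ?_
  have : single u (f.coeff u) ^ m = algebraMap R[S] R[G] (single ⟨m • u, hmu⟩ (f.coeff u ^ m)) := by
    rw [algebraMap_addSubmonoid_single, single_pow]
  exact this ▸ isIntegral_algebraMap

theorem isIntegral_iff_support_subset_rootClosure [IsDomain R] [Module.Free ℤ G]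
    {S : AddSubmonoid G} (hS : AddSubgroup.closure (S : Set G) = ⊤) {f : R[G]} :
    IsIntegral R[S] f ↔ (f.coeff.support : Set G) ⊆ rootClosure S := by
  classical
  refine ⟨fun hf ↦ ?_, isIntegral_of_support_subset_rootClosure⟩
  obtain ⟨_, _⟩ := exists_linearOrder_isOrderedAddMonoid G
  let g : R[G] := ofCoeff (f.coeff.filter (· ∈ rootClosure S))
  let h : R[G] := ofCoeff (f.coeff.filter (· ∉ rootClosure S))
  have hgh : g + h = f := by
    ext1
    exact Finsupp.filter_add_filter_not f.coeff (· ∈ rootClosure S)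
  have hg : IsIntegral R[S] g := isIntegral_of_support_subset_rootClosure fun u hu ↦
    (Finset.mem_filter.1 hu).2
  have hh : IsIntegral R[S] h := eq_sub_of_add_eq' hgh ▸ hf.sub hg
  have hh0 : h = 0 := by
    by_contra hne
    obtain ⟨u, hu⟩ := exists_isGreatest_support hne
    exact (Finset.mem_filter.1 hu.1).2 (mem_rootClosure_of_isGreatest_support hS hh hu)
  intro u hu
  rw [← hgh, hh0, add_zero] at hu
  exact (Finset.mem_filter.1 hu).2

theorem isIntegrallyClosedIn_of_rootClosure_subset [IsDomain R] [Module.Free ℤ G]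
    {S : AddSubmonoid G} (hS : AddSubgroup.closure (S : Set G) = ⊤) (hroot : rootClosure S ⊆ S) :
    IsIntegrallyClosedIn R[S] R[G] :=
  isIntegrallyClosedIn_iff.2 ⟨algebraMap_addSubmonoid_injective S, fun hf ↦
    mem_range_algebraMap_iff_support_subset.2
      (((isIntegral_iff_support_subset_rootClosure hS).1 hf).trans hroot)⟩

theorem rootClosure_subset_of_isIntegrallyClosed {S : AddSubmonoid G}
    (hS : AddSubgroup.closure (S : Set G) = ⊤) [IsDomain R[S]] [IsIntegrallyClosed R[S]] :
    rootClosure S ⊆ S := by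
  rintro u ⟨m, hm, hmu⟩
  have : Nontrivial R := (algebraMap R R[S]).domain_nontrivial
  obtain ⟨c, hc, hcu⟩ := exists_add_mem_of_closure_eq_top hS u
  have hpow : (single ⟨c, hc⟩ 1 : R[S]) ^ m ∣ single ⟨c + u, hcu⟩ 1 ^ m := by
    refine ⟨single ⟨m • u, hmu⟩ 1, ?_⟩
    simp only [single_pow, single_mul_single, one_pow, mul_one]
    congr 1
    ext1
    simp
  obtain ⟨q, hq⟩ := (IsIntegrallyClosed.pow_dvd_pow_iff (by omega)).1 hpow
  obtain ⟨s, hs⟩ : ∃ s : S, ⟨c, hc⟩ + s = ⟨c + u, hcu⟩ := by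
    by_contra! hne
    simpa [coeff_single_mul_of_forall_add_ne _ _ hne] using congrArg (coeff · ⟨c + u, hcu⟩) hq
  have hsu : (s : G) = u := add_left_cancel (congrArg Subtype.val hs)
  exact hsu ▸ s.2

end Embedding

section Free

attribute [local instance] algebraOfAddSubmonoid

variable (R : Type*) [CommRing R] [IsDomain R] {G : Type*} [AddCommGroup G] [Module.Free ℤ G]

variable (G) in
theorem isDomain_addMonoidAlgebra : IsDomain R[G] := by
  obtain ⟨_, _⟩ := exists_linearOrder_isOrderedAddMonoid G
  infer_instance

theorem isDomain_addMonoidAlgebra_addSubmonoid (S : AddSubmonoid G) : IsDomain R[S] :=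
  have := isDomain_addMonoidAlgebra R G
  (algebraMap_addSubmonoid_injective S).isDomain (algebraMap R[S] R[G])

variable (G) in
theorem isIntegrallyClosed_addMonoidAlgebra [IsIntegrallyClosed R] : IsIntegrallyClosed R[G] := by
  let σ := Module.Free.ChooseBasisIndex ℤ G
  obtain ⟨ι, hι, hclosure⟩ :=
    exists_injective_closure_mrange_eq_top (Module.Free.chooseBasis ℤ G)
  let N := AddMonoidHom.mrange ι
  let e : (σ →₀ ℕ) ≃+ N :=
    .ofBijective ι.mrangeRestrict
      ⟨fun _ _ h ↦ hι (congrArg Subtype.val h), ι.mrangeRestrict_surjective⟩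
  have := isIntegrallyClosed_mvPolynomial σ R
  have : IsIntegrallyClosed R[N] := .of_equiv (domCongr R R e).toRingEquiv
  have := isDomain_addMonoidAlgebra_addSubmonoid R N
  have := isLocalization_mrange_of R hclosure
  refine isIntegrallyClosed_of_isLocalization R[G] (MonoidHom.mrange (of R N)) ?_
  rintro _ ⟨s, rfl⟩
  exact mem_nonZeroDivisors_of_ne_zero (by simp)

theorem isIntegrallyClosed_addMonoidAlgebra_addSubmonoid [IsIntegrallyClosed R]
    {S : AddSubmonoid G} (hS : AddSubgroup.closure (S : Set G) = ⊤) (hroot : rootClosure S ⊆ S) :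
    IsIntegrallyClosed R[S] := by
  have := isDomain_addMonoidAlgebra R G
  have := isIntegrallyClosed_addMonoidAlgebra R G
  have := isIntegrallyClosedIn_of_rootClosure_subset (R := R) hS hroot
  have : FaithfulSMul R[S] R[G] :=
    (faithfulSMul_iff_algebraMap_injective _ _).2 (algebraMap_addSubmonoid_injective S)
  exact .of_isIntegrallyClosed_of_isIntegrallyClosedIn R[S] R[G]

theorem statement8_general [IsIntegrallyClosed R] (S : AddSubmonoid G)
    (hgen : AddSubgroup.closure (S : Set G) = ⊤) :
    (IsDomain R[S] ∧ IsIntegrallyClosed R[S]) ↔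
      ∀ u : G, (∃ m : ℕ, 1 ≤ m ∧ m • u ∈ S) → u ∈ S :=
  ⟨fun ⟨_, _⟩ _ hu ↦ rootClosure_subset_of_isIntegrallyClosed (R := R) hgen hu, fun hroot ↦
    ⟨isDomain_addMonoidAlgebra_addSubmonoid R S,
      isIntegrallyClosed_addMonoidAlgebra_addSubmonoid R hgen hroot⟩⟩

end Free

/-- Let `S` be a finitely generated submonoid of `ℤ^d` generating `ℤ^d` as a group.  The monoid
algebra `k[S]` is an integrally closed (normal) domain if and only if `S` is saturated, i.e.
whenever `m • u ∈ S` for some `m ≥ 1` and `u ∈ ℤ^d`, already `u ∈ S`.  (Since `S` is finitely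
generated, the saturation condition describes exactly the lattice points `Cone(S) ∩ ℤ^d` of the
rational polyhedral cone generated by `S`.) -/
theorem statement8 (k : Type*) [Field k] (d : ℕ) (S : AddSubmonoid (Fin d → ℤ))
    (hfg : S.FG) (hgen : AddSubgroup.closure (S : Set (Fin d → ℤ)) = ⊤) :
    (IsDomain (AddMonoidAlgebra k S) ∧ IsIntegrallyClosed (AddMonoidAlgebra k S)) ↔
      ∀ u : Fin d → ℤ, (∃ m : ℕ, 1 ≤ m ∧ m • u ∈ S) → u ∈ S :=
  statement8_general k S hgen
end
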